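/- arXiv:1309.1986 — 3 statements merged into one kernel-verified Lean document; each statement's English description precedes it below -/
import Mathlib

section
/- Let P be a Poisson algebra over a field k and let V = (V, ·_V, [-,-]_V) be a fixed Poisson algebra. Then the relation ≈_l of being local cohomologous is an equivalence relation on the set LPS(P,V) of all local crossed systems of P by (V, ·_V, [-,-]_V), and the map sending the class of (⇀, ◁, ϑ, ▷, f) to the equivalence class of the crossed product P♯V is a bijection from PH²(P, (V, ·_V, [-,-]_V)) := LPS(P,V)/≈_l onto Ext(P, (V, ·_V, [-,-]_V)), the set of equivalence classes of all Poisson algebra extensions of P by V up to isomorphisms of Poisson algebras that stabilize V and co-stabilize P. -/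
/-!
A linear map `r : P → V` satisfies the relations of `≈_l` between two local crossed systems exactly
when `(p, x) ↦ (p, x + r p)` is a Poisson isomorphism of their crossed products, and every
isomorphism stabilizing `V` and co-stabilizing `P` has this form (`localRel_iff_extRel`).
So `≈_l` is the pullback of equivalence of extensions along `Ω ↦ P ♯ V`; this makes it an
equivalence relation and the induced map on classes well defined and injective. The map is
surjective because over a field every extension `E → P` has a linear section, which identifies
`E` with `P × V` and carries its structure to a crossed product (`exists_extRel_sharpExt`).
-/

universe u

section Defs

variable (k : Type u) [Field k]

/-- A map in two variables is `k`-bilinear. -/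
def IsBilin {A B C : Type u} [AddCommGroup A] [Module k A] [AddCommGroup B] [Module k B]
    [AddCommGroup C] [Module k C] (f : A → B → C) : Prop :=
  (∀ a a' b, f (a + a') b = f a b + f a' b) ∧
  (∀ (c : k) (a b), f (c • a) b = c • f a b) ∧
  (∀ a b b', f a (b + b') = f a b + f a b') ∧
  (∀ (c : k) (a b), f a (c • b) = c • f a b)

/-- `(A, mul, br)` is a (not necessarily commutative or unital) Poisson algebra over `k`:
`mul` is a bilinear associative multiplication, `br` is a Lie bracket and the
Leibniz law `[ab, c] = [a,c]b + a[b,c]` holds. -/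
structure IsPoisson {A : Type u} [AddCommGroup A] [Module k A]
    (mul br : A → A → A) : Prop where
  mul_bilin : IsBilin k mul
  br_bilin : IsBilin k br
  mul_assoc : ∀ a b c, mul (mul a b) c = mul a (mul b c)
  br_alt : ∀ a, br a a = 0
  jacobi : ∀ a b c, br (br a b) c + br (br b c) a + br (br c a) b = 0
  leibniz : ∀ a b c, br (mul a b) c = mul (br a c) b + mul a (br b c)

variable (P V : Type u) [AddCommGroup P] [Module k P] [AddCommGroup V] [Module k V]

/-- A pre-crossed datum `Ω(P,V) = (⇀, ◁, ϑ, ·_V, ▷, f, [-,-]_V)` of a Poisson algebra `P`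
by a vector space `V`:  seven bilinear maps.  Here `hl = ⇀`, `hr = ◁`, `theta = ϑ`,
`mulV = ·_V`, `lact = ▷`, `cf = f` and `brV = [-,-]_V`. -/
structure PreCrossedDatum where
  hl : P → V → V
  hr : V → P → V
  theta : P → P → V
  mulV : V → V → V
  lact : P → V → V
  cf : P → P → V
  brV : V → V → V
  hl_bilin : IsBilin k hl
  hr_bilin : IsBilin k hr
  theta_bilin : IsBilin k theta
  mulV_bilin : IsBilin k mulV
  lact_bilin : IsBilin k lact
  cf_bilin : IsBilin k cf
  brV_bilin : IsBilin k brV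

variable {k P V}

/-- The multiplication `(p,x) ⋆ (q,y) = (pq, ϑ(p,q) + p⇀y + x◁q + x·y)` of `P ♯ V`. -/
def sharpMul (mulP : P → P → P) (Om : PreCrossedDatum k P V) :
    P × V → P × V → P × V :=
  fun a b => (mulP a.1 b.1,
    Om.theta a.1 b.1 + Om.hl a.1 b.2 + Om.hr a.2 b.1 + Om.mulV a.2 b.2)

/-- The bracket `{(p,x), (q,y)} = ([p,q], f(p,q) + p▷y − q▷x + [x,y]_V)` of `P ♯ V`. -/
def sharpBr (brP : P → P → P) (Om : PreCrossedDatum k P V) :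
    P × V → P × V → P × V :=
  fun a b => (brP a.1 b.1,
    Om.cf a.1 b.1 + Om.lact a.1 b.2 - Om.lact b.1 a.2 + Om.brV a.2 b.2)

/-- A pre-crossed datum is a crossed system when `P ♯ V` is a Poisson algebra. -/
def IsCrossedSystem (mulP brP : P → P → P) (Om : PreCrossedDatum k P V) : Prop :=
  IsPoisson k (sharpMul mulP Om) (sharpBr brP Om)

end Defs

section Ext

/-- An extension `0 → V → E → P → 0` of the Poisson algebra `(P, mulP, brP)` by the Poisson
algebra `(V, mulV, brV)`. -/
structure PoissonExt (k P V : Type u) [Field k] [AddCommGroup P] [Module k P]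
    [AddCommGroup V] [Module k V]
    (mulP brP : P → P → P) (mulV brV : V → V → V) : Type (u + 1) where
  carrier : Type u
  [addE : AddCommGroup carrier]
  [modE : Module k carrier]
  mulE : carrier → carrier → carrier
  brE : carrier → carrier → carrier
  poisson : IsPoisson k mulE brE
  incl : V →ₗ[k] carrier
  proj : carrier →ₗ[k] P
  incl_mul : ∀ x y, incl (mulV x y) = mulE (incl x) (incl y)
  incl_br : ∀ x y, incl (brV x y) = brE (incl x) (incl y)
  proj_mul : ∀ a b, proj (mulE a b) = mulP (proj a) (proj b)
  proj_br : ∀ a b, proj (brE a b) = brP (proj a) (proj b)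
  incl_inj : Function.Injective incl
  proj_surj : Function.Surjective proj
  exact : ∀ e, proj e = 0 ↔ e ∈ Set.range incl

variable {k P V : Type u} [Field k] [AddCommGroup P] [Module k P]
  [AddCommGroup V] [Module k V] {mulP brP : P → P → P} {mulV brV : V → V → V}

/-- Equivalence of extensions: an isomorphism of Poisson algebras stabilizing `V`
and co-stabilizing `P`. -/
def ExtRel (e₁ e₂ : PoissonExt k P V mulP brP mulV brV) : Prop :=
  letI := e₁.addE; letI := e₁.modE; letI := e₂.addE; letI := e₂.modE
  ∃ φ : e₁.carrier ≃ₗ[k] e₂.carrier,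
    (∀ a b, φ (e₁.mulE a b) = e₂.mulE (φ a) (φ b)) ∧
    (∀ a b, φ (e₁.brE a b) = e₂.brE (φ a) (φ b)) ∧
    (∀ v, φ (e₁.incl v) = e₂.incl v) ∧
    (∀ a, e₂.proj (φ a) = e₁.proj a)

end Ext

section Statement

variable {k P V : Type u} [Field k] [AddCommGroup P] [Module k P]
  [AddCommGroup V] [Module k V]

/-- A local crossed system of `P` by the fixed Poisson algebra `(V, mulV, brV)`:
a crossed system whose datum has the prescribed multiplication and bracket on `V`. -/
def LocalCS (mulP brP : P → P → P) (mulV brV : V → V → V) : Type u :=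
  {Om : PreCrossedDatum k P V //
    IsCrossedSystem mulP brP Om ∧ Om.mulV = mulV ∧ Om.brV = brV}

/-- Two local crossed systems are local cohomologous (`≈_l`). -/
def LocalRel (mulP brP : P → P → P) (mulV brV : V → V → V)
    (Om Om' : LocalCS (k := k) mulP brP mulV brV) : Prop :=
  ∃ r : P →ₗ[k] V,
    (∀ (p : P) (x : V), Om.1.hl p x = Om'.1.hl p x + mulV (r p) x) ∧
    (∀ (p : P) (x : V), Om.1.hr x p = Om'.1.hr x p + mulV x (r p)) ∧
    (∀ p q, Om.1.theta p q = Om'.1.theta p q + Om'.1.hl p (r q) + Om'.1.hr (r p) q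
        - r (mulP p q) + mulV (r p) (r q)) ∧
    (∀ (p : P) (x : V), Om.1.lact p x = Om'.1.lact p x + brV (r p) x) ∧
    (∀ p q, Om.1.cf p q = Om'.1.cf p q + Om'.1.lact p (r q) - Om'.1.lact q (r p)
        + brV (r p) (r q) - r (brP p q))

/-- The extension `e` is isomorphic — by an isomorphism stabilizing `V` and co-stabilizing
`P` — to the crossed product extension `0 → V → P ♯ V → P → 0` associated to `Om`. -/
def ExtIsoSharp (mulP brP : P → P → P) (mulV brV : V → V → V)
    (Om : PreCrossedDatum k P V) (e : PoissonExt k P V mulP brP mulV brV) : Prop :=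
  letI := e.addE; letI := e.modE
  ∃ φ : (P × V) ≃ₗ[k] e.carrier,
    (∀ a b, φ (sharpMul mulP Om a b) = e.mulE (φ a) (φ b)) ∧
    (∀ a b, φ (sharpBr brP Om a b) = e.brE (φ a) (φ b)) ∧
    (∀ v : V, φ (0, v) = e.incl v) ∧
    (∀ a, e.proj (φ a) = a.1)

section Helpers

attribute [local instance] PoissonExt.addE PoissonExt.modE

namespace IsBilin

variable {A B C A' B' C' : Type u} [AddCommGroup A] [Module k A] [AddCommGroup B] [Module k B]
  [AddCommGroup C] [Module k C] [AddCommGroup A'] [Module k A'] [AddCommGroup B'] [Module k B']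
  [AddCommGroup C'] [Module k C'] {f : A → B → C}

theorem zero_left (h : IsBilin k f) (b : B) : f 0 b = 0 := by
  simpa using h.2.1 0 0 b

theorem zero_right (h : IsBilin k f) (a : A) : f a 0 = 0 := by
  simpa using h.2.2.2 0 a 0

theorem comp (h : IsBilin k f) (g₁ : A' →ₗ[k] A) (g₂ : B' →ₗ[k] B) (l : C →ₗ[k] C') :
    IsBilin k (fun a b => l (f (g₁ a) (g₂ b))) := by
  obtain ⟨h1, h2, h3, h4⟩ := h
  refine ⟨?_, ?_, ?_, ?_⟩ <;> intros <;> simp [h1, h2, h3, h4]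

end IsBilin

theorem IsPoisson.br_skew {A : Type u} [AddCommGroup A] [Module k A] {mul br : A → A → A}
    (h : IsPoisson k mul br) (a b : A) : br a b = -br b a := by
  have h1 := h.br_alt (a + b)
  rw [h.br_bilin.1, h.br_bilin.2.2.1, h.br_bilin.2.2.1, h.br_alt, h.br_alt] at h1
  rw [eq_neg_iff_add_eq_zero]
  simpa using h1

/-- Poisson structures pull back along linear isomorphisms. -/
theorem IsPoisson.of_equiv {A B : Type u} [AddCommGroup A] [Module k A] [AddCommGroup B]
    [Module k B] {mul br : A → A → A} {mul' br' : B → B → B} (h : IsPoisson k mul' br')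
    (φ : A ≃ₗ[k] B) (hm : ∀ a b, φ (mul a b) = mul' (φ a) (φ b))
    (hb : ∀ a b, φ (br a b) = br' (φ a) (φ b)) : IsPoisson k mul br := by
  obtain ⟨⟨m1, m2, m3, m4⟩, ⟨b1, b2, b3, b4⟩, has, hal, hj, hl⟩ := h
  refine ⟨⟨?_, ?_, ?_, ?_⟩, ⟨?_, ?_, ?_, ?_⟩, ?_, ?_, ?_, ?_⟩ <;> intros <;>
    apply φ.injective <;> simp only [map_add, map_smul, map_zero, *]

variable {mulP brP : P → P → P} {mulV brV : V → V → V}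

/-- The crossed product `P ♯ V`, with the canonical maps `v ↦ (0, v)` and `(p, x) ↦ p`, as an
extension of `P` by `V`. -/
def sharpExt (hP : IsPoisson k mulP brP) (Om : LocalCS (k := k) mulP brP mulV brV) :
    PoissonExt k P V mulP brP mulV brV where
  carrier := P × V
  mulE := sharpMul mulP Om.1
  brE := sharpBr brP Om.1
  poisson := Om.2.1
  incl := LinearMap.inr k P V
  proj := LinearMap.fst k P V
  incl_mul x y := by
    simp [sharpMul, hP.mul_bilin.zero_left, Om.1.theta_bilin.zero_left, Om.1.hl_bilin.zero_left,
      Om.1.hr_bilin.zero_right, Om.2.2.1]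
  incl_br x y := by
    simp [sharpBr, hP.br_bilin.zero_left, Om.1.cf_bilin.zero_left, Om.1.lact_bilin.zero_left,
      Om.2.2.2]
  proj_mul _ _ := rfl
  proj_br _ _ := rfl
  incl_inj := LinearMap.inr_injective
  proj_surj := LinearMap.fst_surjective
  exact e := by
    constructor
    · intro h
      exact ⟨e.2, Prod.ext h.symm rfl⟩
    · rintro ⟨v, rfl⟩
      rfl

theorem extRel_equivalence :
    Equivalence (fun e₁ e₂ : PoissonExt k P V mulP brP mulV brV => ExtRel e₁ e₂) where
  refl e := ⟨LinearEquiv.refl k e.carrier, fun _ _ => rfl, fun _ _ => rfl, fun _ => rfl,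
    fun _ => rfl⟩
  symm := by
    rintro e₁ e₂ ⟨φ, hm, hb, hi, hp⟩
    refine ⟨φ.symm, fun a b => ?_, fun a b => ?_, fun v => ?_, fun a => ?_⟩
    · apply φ.injective; simp [hm]
    · apply φ.injective; simp [hb]
    · apply φ.injective; simp [hi]
    · rw [← hp, φ.apply_symm_apply]
  trans := by
    rintro e₁ e₂ e₃ ⟨φ, hm, hb, hi, hp⟩ ⟨ψ, hm', hb', hi', hp'⟩
    refine ⟨φ.trans ψ, fun a b => ?_, fun a b => ?_, fun v => ?_, fun a => ?_⟩
    · simp [hm, hm']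
    · simp [hb, hb']
    · simp [hi, hi']
    · simp [hp, hp']

/-- The linear automorphism `(p, x) ↦ (p, x + r p)` of `P × V`. -/
def shear (r : P →ₗ[k] V) : (P × V) ≃ₗ[k] (P × V) where
  toFun a := (a.1, a.2 + r a.1)
  invFun a := (a.1, a.2 - r a.1)
  map_add' a b := by ext <;> simp; abel
  map_smul' c a := by ext <;> simp
  left_inv a := by simp
  right_inv a := by simp

/-- A linear map `r` witnessing `≈_l` is the same thing as an equivalence of crossed products
of the form `(p, x) ↦ (p, x + r p)`, and every equivalence has this form. -/
theorem localRel_iff_extRel (hP : IsPoisson k mulP brP) (hV : IsPoisson k mulV brV)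
    (Om Om' : LocalCS (k := k) mulP brP mulV brV) :
    LocalRel mulP brP mulV brV Om Om' ↔ ExtRel (sharpExt hP Om) (sharpExt hP Om') := by
  obtain ⟨Om, hO, hm, hb⟩ := Om
  obtain ⟨Om', hO', hm', hb'⟩ := Om'
  have hskew := hV.br_skew
  obtain ⟨m1, -, m3, -⟩ := id hV.mul_bilin
  obtain ⟨b1, -, b3, -⟩ := id hV.br_bilin
  have hl3 := Om'.hl_bilin.2.2.1
  have hr1 := Om'.hr_bilin.1
  have la3 := Om'.lact_bilin.2.2.1
  constructor
  · rintro ⟨r, h1, h2, h3, h4, h5⟩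
    dsimp only at h1 h2 h3 h4 h5
    refine ⟨shear r, ?_, ?_, ?_, fun _ => rfl⟩
    · rintro ⟨p, x⟩ ⟨q, y⟩
      refine Prod.ext rfl ?_
      change Om.theta p q + Om.hl p y + Om.hr x q + Om.mulV x y + r (mulP p q) =
        Om'.theta p q + Om'.hl p (y + r q) + Om'.hr (x + r p) q + Om'.mulV (x + r p) (y + r q)
      simp only [h1, h2, h3, hm, hm', hl3, hr1, m1, m3]
      abel
    · rintro ⟨p, x⟩ ⟨q, y⟩
      refine Prod.ext rfl ?_
      change Om.cf p q + Om.lact p y - Om.lact q x + Om.brV x y + r (brP p q) =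
        Om'.cf p q + Om'.lact p (y + r q) - Om'.lact q (x + r p) + Om'.brV (x + r p) (y + r q)
      simp only [h4, h5, hb, hb', la3, b1, b3]
      rw [hskew x (r q)]
      abel
    · intro v
      refine Prod.ext rfl ?_
      change v + r 0 = v
      simp
  · rintro ⟨φ, hφm, hφb, hφi, hφp⟩
    change (P × V) ≃ₗ[k] (P × V) at φ
    change ∀ a b, φ (sharpMul mulP Om a b) = sharpMul mulP Om' (φ a) (φ b) at hφm
    change ∀ a b, φ (sharpBr brP Om a b) = sharpBr brP Om' (φ a) (φ b) at hφb
    change ∀ v : V, φ (0, v) = (0, v) at hφi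
    change ∀ a, (φ a).1 = a.1 at hφp
    obtain ⟨r, hr⟩ : ∃ r : P →ₗ[k] V, ∀ p, r p = (φ (p, 0)).2 :=
      ⟨LinearMap.snd k P V ∘ₗ φ.toLinearMap ∘ₗ LinearMap.inl k P V, fun p => rfl⟩
    have hφ : ∀ p x, φ (p, x) = (p, x + r p) := by
      intro p x
      have : ((p, x) : P × V) = (p, 0) + (0, x) := by simp
      rw [this, map_add, hφi]
      refine Prod.ext ?_ ?_
      · simp [hφp]
      · simp [hr, add_comm]
    have keym : ∀ p x q y, Om.theta p q + Om.hl p y + Om.hr x q + mulV x y + r (mulP p q) =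
        Om'.theta p q + Om'.hl p (y + r q) + Om'.hr (x + r p) q + mulV (x + r p) (y + r q) := by
      intro p x q y
      have := congrArg Prod.snd (hφm (p, x) (q, y))
      simpa only [sharpMul, hφ, hm, hm'] using this
    have keyb : ∀ p x q y, Om.cf p q + Om.lact p y - Om.lact q x + brV x y + r (brP p q) =
        Om'.cf p q + Om'.lact p (y + r q) - Om'.lact q (x + r p) + brV (x + r p) (y + r q) := by
      intro p x q y
      have := congrArg Prod.snd (hφb (p, x) (q, y))
      simpa only [sharpBr, hφ, hb, hb'] using this
    have e1 : ∀ p q, Om.theta p q = Om'.theta p q + Om'.hl p (r q) + Om'.hr (r p) q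
        - r (mulP p q) + mulV (r p) (r q) := by
      intro p q
      have := keym p 0 q 0
      simp only [Om.hl_bilin.zero_right, Om.hr_bilin.zero_left, hV.mul_bilin.zero_left, zero_add,
        add_zero] at this
      rw [eq_sub_of_add_eq this]
      abel
    have e2 : ∀ p q, Om.cf p q = Om'.cf p q + Om'.lact p (r q) - Om'.lact q (r p)
        + brV (r p) (r q) - r (brP p q) := by
      intro p q
      have := keyb p 0 q 0
      simp only [Om.lact_bilin.zero_right, hV.br_bilin.zero_left, zero_add, add_zero,
        sub_zero] at this
      exact eq_sub_of_add_eq this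
    refine ⟨r, fun p x => ?_, fun p x => ?_, e1, fun p x => ?_, e2⟩
    · have := keym p 0 0 x
      simp only [Om.hr_bilin.zero_left, Om.theta_bilin.zero_right, Om'.theta_bilin.zero_right,
        Om'.hr_bilin.zero_right, hV.mul_bilin.zero_left, hP.mul_bilin.zero_right, map_zero,
        zero_add, add_zero] at this
      exact this
    · have := keym 0 x p 0
      simp only [Om.hl_bilin.zero_left, Om.theta_bilin.zero_left, Om'.theta_bilin.zero_left,
        Om'.hl_bilin.zero_left, hV.mul_bilin.zero_right, hP.mul_bilin.zero_left, map_zero,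
        zero_add, add_zero] at this
      exact this
    · have := keyb p 0 0 x
      simp only [Om.lact_bilin.zero_left, Om.cf_bilin.zero_right, Om'.cf_bilin.zero_right,
        Om'.lact_bilin.zero_left, hV.br_bilin.zero_left, hP.br_bilin.zero_right, map_zero,
        zero_add, add_zero, sub_zero] at this
      exact this

/-- A linear section `s` of `E → P` identifies `E` with `P × V` by `(p, x) ↦ s p + x`;
reading the Poisson structure of `E` through it gives a local crossed system. -/
theorem exists_extRel_sharpExt (hP : IsPoisson k mulP brP) (hV : IsPoisson k mulV brV)
    (e : PoissonExt k P V mulP brP mulV brV) :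
    ∃ Om : LocalCS (k := k) mulP brP mulV brV, ExtRel (sharpExt hP Om) e := by
  obtain ⟨s, hs⟩ := e.proj.exists_rightInverse_of_surjective
    (LinearMap.range_eq_top.2 e.proj_surj)
  replace hs : ∀ p, e.proj (s p) = p := fun p => LinearMap.congr_fun hs p
  have hpi : ∀ x, e.proj (e.incl x) = 0 := fun x => (e.exact _).2 ⟨x, rfl⟩
  -- the `V`-coordinate of `E` relative to the section `s`
  obtain ⟨t, ht⟩ : ∃ t : e.carrier →ₗ[k] V, ∀ a, e.incl (t a) = a - s (e.proj a) := by
    have hex : ∀ a, ∃ v, e.incl v = a - s (e.proj a) := fun a =>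
      (e.exact _).1 (by rw [map_sub, hs, sub_self])
    choose t ht using hex
    refine ⟨{ toFun := t, map_add' := fun a b => ?_, map_smul' := fun c a => ?_ }, ht⟩
    · apply e.incl_inj
      simp only [map_add, ht]
      abel
    · apply e.incl_inj
      simp only [map_smul, ht, RingHom.id_apply, smul_sub]
  let φ : (P × V) ≃ₗ[k] e.carrier :=
    { toFun := fun a => s a.1 + e.incl a.2
      invFun := fun a => (e.proj a, t a)
      map_add' := fun a b => by simp only [Prod.fst_add, Prod.snd_add, map_add]; abel
      map_smul' := fun c a => by simp
      left_inv := fun a => by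
        refine Prod.ext ?_ (e.incl_inj ?_)
        · simp [hs, hpi]
        · simp [ht, hs, hpi]
      right_inv := fun a => by simp [ht] }
  have hφ : ∀ a, φ a = s a.1 + e.incl a.2 := fun _ => rfl
  let Om : PreCrossedDatum k P V :=
    { hl := fun p x => t (e.mulE (s p) (e.incl x))
      hr := fun x p => t (e.mulE (e.incl x) (s p))
      theta := fun p q => t (e.mulE (s p) (s q))
      mulV := mulV
      lact := fun p x => t (e.brE (s p) (e.incl x))
      cf := fun p q => t (e.brE (s p) (s q))
      brV := brV
      hl_bilin := e.poisson.mul_bilin.comp s e.incl t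
      hr_bilin := e.poisson.mul_bilin.comp e.incl s t
      theta_bilin := e.poisson.mul_bilin.comp s s t
      mulV_bilin := hV.mul_bilin
      lact_bilin := e.poisson.br_bilin.comp s e.incl t
      cf_bilin := e.poisson.br_bilin.comp s s t
      brV_bilin := hV.br_bilin }
  obtain ⟨m1, -, m3, -⟩ := id e.poisson.mul_bilin
  obtain ⟨b1, -, b3, -⟩ := id e.poisson.br_bilin
  have hm : ∀ a b, φ (sharpMul mulP Om a b) = e.mulE (φ a) (φ b) := by
    intro a b
    simp only [hφ, sharpMul, Om, map_add, ht, e.incl_mul, e.proj_mul, hs, hpi,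
      hP.mul_bilin.zero_left, hP.mul_bilin.zero_right, map_zero, m1, m3]
    abel
  have hb : ∀ a b, φ (sharpBr brP Om a b) = e.brE (φ a) (φ b) := by
    intro a b
    simp only [hφ, sharpBr, Om, map_add, map_sub, ht, e.incl_br, e.proj_br, hs, hpi,
      hP.br_bilin.zero_right, map_zero, b1, b3]
    rw [e.poisson.br_skew (e.incl a.2) (s b.1)]
    abel
  refine ⟨⟨Om, e.poisson.of_equiv φ hm hb, rfl, rfl⟩, φ, hm, hb, fun v => ?_, fun a => ?_⟩
  · change s 0 + e.incl v = e.incl v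
    simp
  · change e.proj (s a.1 + e.incl a.2) = a.1
    simp [hs, hpi]

end Helpers

/-- **Corollary 2.10 (1).**  For a fixed Poisson algebra `(V, mulV, brV)`, `≈_l` is an
equivalence relation on the set of local crossed systems of `P` by `V`, and
`Ω ↦ P ♯_Ω V` induces a bijection `PH²(P, (V, mulV, brV)) → Ext(P, (V, mulV, brV))`. -/
theorem statement4 (mulP brP : P → P → P) (hP : IsPoisson k mulP brP)
    (mulV brV : V → V → V) (hV : IsPoisson k mulV brV) :
    Equivalence (LocalRel (k := k) mulP brP mulV brV) ∧
    ∃ F : Quot (LocalRel (k := k) mulP brP mulV brV) ≃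
          Quot (fun e₁ e₂ : PoissonExt k P V mulP brP mulV brV => ExtRel e₁ e₂),
      ∀ (Om : LocalCS (k := k) mulP brP mulV brV)
        (e : PoissonExt k P V mulP brP mulV brV),
        F (Quot.mk _ Om) = Quot.mk _ e → ExtIsoSharp mulP brP mulV brV Om.1 e := by
  have hiff := localRel_iff_extRel (k := k) hP hV
  have hext := extRel_equivalence (k := k) (mulP := mulP) (brP := brP) (mulV := mulV) (brV := brV)
  refine ⟨⟨fun Om => (hiff _ _).2 (hext.refl _), fun h => (hiff _ _).2 (hext.symm ((hiff _ _).1 h)),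
    fun h h' => (hiff _ _).2 (hext.trans ((hiff _ _).1 h) ((hiff _ _).1 h'))⟩, ?_⟩
  have hmk : ∀ e₁ e₂ : PoissonExt k P V mulP brP mulV brV,
      Quot.mk (fun e₁ e₂ => ExtRel e₁ e₂) e₁ = Quot.mk _ e₂ → ExtRel e₁ e₂ :=
    fun _ _ h => hext.eqvGen_iff.1 (Quot.eqvGen_exact h)
  let F : Quot (LocalRel (k := k) mulP brP mulV brV) →
      Quot (fun e₁ e₂ : PoissonExt k P V mulP brP mulV brV => ExtRel e₁ e₂) :=
    Quot.map (sharpExt hP) fun _ _ h => (hiff _ _).1 h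
  have hF : Function.Bijective F := by
    constructor
    · rintro ⟨Om⟩ ⟨Om'⟩ h
      exact Quot.sound ((hiff _ _).2 (hmk _ _ h))
    · rintro ⟨e⟩
      obtain ⟨Om, h⟩ := exists_extRel_sharpExt hP hV e
      exact ⟨Quot.mk _ Om, Quot.sound h⟩
  -- `ExtIsoSharp` unfolds to `ExtRel` out of `sharpExt`
  exact ⟨Equiv.ofBijective F hF, fun Om e h => hmk (sharpExt hP Om) e h⟩

end Statement
end

section
/- Let P and V be Poisson algebras over a field k and let Ω(P,V) = (⇀, ◁, ϑ, ·_V, ▷, f, [-,-]_V) be a coboundary crossed system, i.e. there exists a linear map r : P → V such that p⇀x = r(p)·_V x, x◁p = x·_V r(p), p▷x = [r(p),x]_V, ϑ(p,q) = r(p)·_V r(q) − r(pq), and f(p,q) = [r(p),r(q)]_V − r([p,q]) for all p,q ∈ P, x ∈ V. Then the crossed product P♯V is isomorphic, via a Poisson algebra isomorphism stabilizing V and co-stabilizing P, to the direct product Poisson algebra P × V (componentwise multiplication and bracket). -/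
/-!
The isomorphism is the shear `φ(p, x) = (p, r(p) + x)`, with inverse `(p, x) ↦ (p, x - r(p))`.
It visibly stabilizes `V` and co-stabilizes `P`. By bilinearity, the `V`-component of
`φ(p, x) φ(q, y)` in the direct product is `r(p)r(q) + r(p)y + x r(q) + xy`, which is
`r(pq) + ϑ(p,q) + p⇀y + x◁q + xy` by the coboundary relations, i.e. the `V`-component of
`φ((p, x) ⋆ (q, y))`. The same computation applies to the bracket, where antisymmetry
turns `[x, r(q)]` into `-(q▷x)`.
-/

universe u

/-- An alternating biadditive bracket is antisymmetric; the term `− q▷x` of the bracket of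
`P ♯ V` needs this to be rewritten as `[x, r(q)]`. -/
theorem IsPoisson.br_antisymm {k A : Type u} [Field k] [AddCommGroup A] [Module k A]
    {mul br : A → A → A} (h : IsPoisson k mul br) (a b : A) : br a b = -br b a := by
  obtain ⟨hl, -, hr, -⟩ := h.br_bilin
  have hab := h.br_alt (a + b)
  rw [hl, hr, hr, h.br_alt, h.br_alt, zero_add, add_zero] at hab
  exact eq_neg_of_add_eq_zero_left hab

/-- **Example 2.11 (coboundaries).**  If a crossed system of the Poisson algebra `P` by the
Poisson algebra `V` is a coboundary, i.e. all its actions and cocycles are implemented by a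
linear map `r : P → V`, then the crossed product `P ♯ V` is isomorphic, via a Poisson algebra
isomorphism stabilizing `V` and co-stabilizing `P`, to the direct product Poisson algebra
`P × V` with componentwise operations. -/
theorem statement7 {k P V : Type u} [Field k] [AddCommGroup P] [Module k P]
    [AddCommGroup V] [Module k V] (mulP brP : P → P → P) (mulV brV : V → V → V)
    (hP : IsPoisson k mulP brP) (hV : IsPoisson k mulV brV)
    (Om : PreCrossedDatum k P V) (hmulV : Om.mulV = mulV) (hbrV : Om.brV = brV)
    (hcs : IsCrossedSystem mulP brP Om)
    (r : P →ₗ[k] V)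
    (h1 : ∀ (p : P) (x : V), Om.hl p x = mulV (r p) x)
    (h2 : ∀ (p : P) (x : V), Om.hr x p = mulV x (r p))
    (h3 : ∀ (p : P) (x : V), Om.lact p x = brV (r p) x)
    (h4 : ∀ p q, Om.theta p q = mulV (r p) (r q) - r (mulP p q))
    (h5 : ∀ p q, Om.cf p q = brV (r p) (r q) - r (brP p q)) :
    ∃ φ : (P × V) ≃ₗ[k] P × V,
      (∀ a b, φ (sharpMul mulP Om a b) = (mulP (φ a).1 (φ b).1, mulV (φ a).2 (φ b).2)) ∧
      (∀ a b, φ (sharpBr brP Om a b) = (brP (φ a).1 (φ b).1, brV (φ a).2 (φ b).2)) ∧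
      (∀ x : V, φ (0, x) = (0, x)) ∧
      (∀ a, (φ a).1 = a.1) := by
  subst hmulV hbrV
  obtain ⟨mul_add_left, -, mul_add_right, -⟩ := hV.mul_bilin
  obtain ⟨br_add_left, -, br_add_right, -⟩ := hV.br_bilin
  let φ : (P × V) ≃ₗ[k] P × V :=
    { toFun := fun a => (a.1, r a.1 + a.2)
      invFun := fun a => (a.1, a.2 - r a.1)
      map_add' := fun a b => by
        ext
        · rfl
        · simp only [Prod.fst_add, Prod.snd_add, map_add]
          abel
      map_smul' := fun c a => by
        ext
        · rfl
        · simp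
      left_inv := fun a => by simp
      right_inv := fun a => by simp }
  have hφ : ∀ a, φ a = (a.1, r a.1 + a.2) := fun _ => rfl
  refine ⟨φ, fun a b => ?_, fun a b => ?_, fun x => ?_, fun _ => rfl⟩
  · simp only [hφ, sharpMul, h1, h2, h4, mul_add_left, mul_add_right, Prod.mk.injEq, true_and]
    abel
  · simp only [hφ, sharpBr, h3, h5, br_add_left, br_add_right, Prod.mk.injEq, true_and]
    rw [hV.br_antisymm a.2 (r b.1)]
    abel
  · simp [hφ]
end

section
/- Let P and V be vector spaces over a field k, each with the abelian Poisson algebra structure (zero multiplication and zero bracket), denoted P₀ and V₀. Then PH²(P₀, V₀) is in bijection with MA(P,V)/≈ᵃₘ, where MA(P,V) is the set of all metabelian systems of P by V and ≈ᵃₘ is the relation: (⇀, ◁, ϑ, ▷, f) ≈ᵃₘ (⇀', ◁', ϑ', ▷', f') if and only if ⇀ = ⇀', ◁ = ◁', ▷ = ▷' and there exists a linear map r : P → V with ϑ(p,q) = ϑ'(p,q) + p⇀r(q) + r(p)◁q and f(p,q) = f'(p,q) + p▷r(q) − q▷r(p) for all p,q ∈ P. -/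
/-!
A metabelian system amounts to a Poisson structure on `P × V` for which the inclusion of `V` and
the projection onto `P` form an extension of `P₀` by `V₀`: the product and bracket are
`(p,x)(q,y) = (0, ϑ(p,q) + p⇀y + x◁q)` and `[(p,x),(q,y)] = (0, f(p,q) + p▷y - q▷x)`, and the
axioms of a metabelian system are the components of associativity, Jacobi and Leibniz.

Conversely, a linear section `s` of the projection of an extension `E` reads off a system from the
products and brackets of the elements `s p` and `x`, all of which lie in `V` because the
structure of `P₀` is zero. The predicate `Presents E s m` records that `m` arises in this way.
Four facts give the bijection: every pair `(E, s)` presents some system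
(`exists_presents`); `P × V` presents the system it is built from, and all systems related to it
(`exists_presents_toExt`); if `E` presents `m`, then `E` is equivalent to the extension built from
`m` (`extRel_of_presents`); and systems presented by equivalent extensions, with arbitrary sections, are related by `≈ᵃₘ`, the
linear map `r` being the difference of the two sections (`metabelianRel_of_presents`).
-/

universe u

section Statement

variable (k : Type u) [Field k] {P V : Type u} [AddCommGroup P] [Module k P]
  [AddCommGroup V] [Module k V]

/-- A metabelian system of `P` by `V`: five bilinear maps satisfying the compatibility
conditions describing crossed systems of the abelian Poisson algebra `P₀` by `V₀`. -/
structure MetabelianSystem where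
  hl : P → V → V
  hr : V → P → V
  theta : P → P → V
  lact : P → V → V
  cf : P → P → V
  hl_bilin : IsBilin k hl
  hr_bilin : IsBilin k hr
  theta_bilin : IsBilin k theta
  lact_bilin : IsBilin k lact
  cf_bilin : IsBilin k cf
  m1 : ∀ p q x, hr (hl p x) q = hl p (hr x q)
  m2 : ∀ p q r, hr (theta p q) r = hl p (theta q r)
  m3 : ∀ p q x, hl p (hl q x) = 0
  m4 : ∀ p q x, hr (hr x p) q = 0
  m5 : ∀ p, cf p p = 0
  m6 : ∀ p q x, lact p (lact q x) = lact q (lact p x)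
  m7 : ∀ p q r, lact p (cf q r) + lact q (cf r p) + lact r (cf p q) = 0
  m8 : ∀ p q r, lact r (theta p q) + hr (cf p r) q + hl p (cf q r) = 0
  m9 : ∀ p q x, hl p (lact q x) = -(hr (lact p x) q)
  m10 : ∀ p q x, hl p (lact q x) = lact q (hl p x)
  m11 : ∀ p q x, hr (lact q x) p = lact q (hr x p)

/-- The equivalence relation `≈ᵃₘ` on the set of metabelian systems of `P` by `V`. -/
def MetabelianRel (m m' : MetabelianSystem k (P := P) (V := V)) : Prop :=
  m.hl = m'.hl ∧ m.hr = m'.hr ∧ m.lact = m'.lact ∧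
  ∃ r : P →ₗ[k] V,
    (∀ p q, m.theta p q = m'.theta p q + m.hl p (r q) + m.hr (r p) q) ∧
    (∀ p q, m.cf p q = m'.cf p q + m.lact p (r q) - m.lact q (r p))

attribute [local instance] PoissonExt.addE PoissonExt.modE

section Bilin

variable {k} {A B C : Type u} [AddCommGroup A] [Module k A] [AddCommGroup B] [Module k B]
  [AddCommGroup C] [Module k C] {f : A → B → C}

lemma IsBilin.zero_left_s9 (h : IsBilin k f) (b : B) : f 0 b = 0 := by
  simpa using h.2.1 0 0 b

lemma IsBilin.zero_right_s9 (h : IsBilin k f) (a : A) : f a 0 = 0 := by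
  simpa using h.2.2.2 0 a 0

lemma IsBilin.neg_left (h : IsBilin k f) (a : A) (b : B) : f (-a) b = -f a b := by
  simpa using h.2.1 (-1) a b

lemma IsBilin.neg_right (h : IsBilin k f) (a : A) (b : B) : f a (-b) = -f a b := by
  simpa using h.2.2.2 (-1) a b

lemma IsBilin.sub_left (h : IsBilin k f) (a a' : A) (b : B) :
    f (a - a') b = f a b - f a' b := by
  rw [sub_eq_add_neg, h.1, h.neg_left, sub_eq_add_neg]

lemma IsBilin.sub_right (h : IsBilin k f) (a : A) (b b' : B) :
    f a (b - b') = f a b - f a b' := by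
  rw [sub_eq_add_neg, h.2.2.1, h.neg_right, sub_eq_add_neg]

lemma IsBilin.antisymm {g : A → A → C} (h : IsBilin k g) (h0 : ∀ a, g a a = 0) (a b : A) :
    g a b = -g b a := by
  have := h0 (a + b)
  rw [h.1, h.2.2.1, h.2.2.1, h0, h0, zero_add, add_zero] at this
  exact eq_neg_of_add_eq_zero_left this

end Bilin

/-- The extensions of the abelian Poisson algebra `P₀` by the abelian Poisson algebra `V₀`. -/
abbrev AbExt (k : Type u) [Field k] (P V : Type u) [AddCommGroup P] [Module k P]
    [AddCommGroup V] [Module k V] : Type (u + 1) :=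
  PoissonExt k P V (fun _ _ => 0) (fun _ _ => 0) (fun _ _ => 0) (fun _ _ => 0)

variable {k}

/-- The extension `P × V` built from a metabelian system, with
`(p,x)(q,y) = (0, ϑ(p,q) + p⇀y + x◁q)` and `[(p,x),(q,y)] = (0, f(p,q) + p▷y - q▷x)`. -/
def MetabelianSystem.toExt (m : MetabelianSystem k (P := P) (V := V)) : AbExt k P V where
  carrier := P × V
  mulE a b := (0, m.theta a.1 b.1 + m.hl a.1 b.2 + m.hr a.2 b.1)
  brE a b := (0, m.cf a.1 b.1 + m.lact a.1 b.2 - m.lact b.1 a.2)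
  incl := LinearMap.inr k P V
  proj := LinearMap.fst k P V
  incl_mul x y := by
    simp [m.theta_bilin.zero_left_s9, m.hl_bilin.zero_left_s9, m.hr_bilin.zero_right_s9]
  incl_br x y := by
    simp [m.cf_bilin.zero_left_s9, m.lact_bilin.zero_left_s9]
  proj_mul a b := rfl
  proj_br a b := rfl
  incl_inj := LinearMap.inr_injective
  proj_surj := LinearMap.fst_surjective
  exact e := by
    constructor
    · intro h
      exact ⟨e.2, Prod.ext h.symm rfl⟩
    · rintro ⟨x, rfl⟩
      rfl
  poisson :=
    { mul_bilin := by
        obtain ⟨a1, a2, a3, a4⟩ := m.theta_bilin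
        obtain ⟨b1, b2, b3, b4⟩ := m.hl_bilin
        obtain ⟨c1, c2, c3, c4⟩ := m.hr_bilin
        refine ⟨fun a a' b => ?_, fun c a b => ?_, fun a b b' => ?_, fun c a b => ?_⟩ <;>
          ext <;> simp [*] <;> abel
      br_bilin := by
        obtain ⟨a1, a2, a3, a4⟩ := m.cf_bilin
        obtain ⟨b1, b2, b3, b4⟩ := m.lact_bilin
        refine ⟨fun a a' b => ?_, fun c a b => ?_, fun a b b' => ?_, fun c a b => ?_⟩ <;>
          ext <;> simp [*, smul_sub] <;> abel
      mul_assoc := by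
        rintro ⟨p, x⟩ ⟨q, y⟩ ⟨r, z⟩
        refine Prod.ext rfl ?_
        simp only [m.theta_bilin.zero_left_s9, m.theta_bilin.zero_right_s9, m.hl_bilin.zero_left_s9,
          m.hr_bilin.zero_right_s9, m.hr_bilin.1, m.hl_bilin.2.2.1, m.m1, m.m2, m.m3, m.m4]
        abel
      br_alt := by
        rintro ⟨p, x⟩
        refine Prod.ext rfl ?_
        simp [m.m5]
      jacobi := by
        rintro ⟨p, x⟩ ⟨q, y⟩ ⟨r, z⟩
        refine Prod.ext (by simp) ?_
        simp only [Prod.snd_add, Prod.snd_zero, m.cf_bilin.zero_left_s9, m.lact_bilin.zero_left_s9,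
          m.lact_bilin.2.2.1, m.lact_bilin.sub_right, m.m6 r p y, m.m6 q r x, m.m6 p q z]
        refine Eq.trans ?_ (neg_eq_zero.2 (m.m7 p q r))
        abel
      leibniz := by
        rintro ⟨p, x⟩ ⟨q, y⟩ ⟨r, z⟩
        refine Prod.ext (by simp) ?_
        simp only [Prod.snd_add, m.cf_bilin.zero_left_s9, m.lact_bilin.zero_left_s9,
          m.theta_bilin.zero_left_s9, m.theta_bilin.zero_right_s9, m.hl_bilin.zero_left_s9,
          m.hr_bilin.zero_right_s9, m.lact_bilin.2.2.1, m.hl_bilin.2.2.1, m.hl_bilin.sub_right,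
          m.hr_bilin.1, m.hr_bilin.sub_left, m.m11, ← m.m10]
        rw [m.m9 p q z, m.m11,
          eq_neg_of_add_eq_zero_left ((add_assoc _ _ _).symm.trans (m.m8 p q r))]
        abel }

/-- The extension `E` with linear section `s` of its projection presents the metabelian system `m`:
the five maps of `m` are the products and brackets in `E` of elements `s p` and `x`. -/
structure Presents (e : AbExt k P V) (s : P →ₗ[k] e.carrier)
    (m : MetabelianSystem k (P := P) (V := V)) : Prop where
  sec : ∀ p, e.proj (s p) = p
  hl : ∀ p x, e.incl (m.hl p x) = e.mulE (s p) (e.incl x)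
  hr : ∀ x p, e.incl (m.hr x p) = e.mulE (e.incl x) (s p)
  theta : ∀ p q, e.incl (m.theta p q) = e.mulE (s p) (s q)
  lact : ∀ p x, e.incl (m.lact p x) = e.brE (s p) (e.incl x)
  cf : ∀ p q, e.incl (m.cf p q) = e.brE (s p) (s q)

/-- Related systems are presented by the same extension: if `r` relates `m` to `m'`, then `m` is
presented by the extension built from `m'` with the section `p ↦ (p, r p)`. -/
lemma exists_presents_toExt {m m' : MetabelianSystem k (P := P) (V := V)}
    (h : MetabelianRel k m m') : ∃ s, Presents m'.toExt s m := by
  obtain ⟨hhl, hhr, hla, r, ht, hc⟩ := h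
  refine ⟨LinearMap.prod LinearMap.id r, fun p => rfl, ?_, ?_, ?_, ?_, ?_⟩
  · intro p x
    refine Prod.ext rfl ?_
    change m.hl p x = m'.theta p 0 + m'.hl p x + m'.hr (r p) 0
    rw [m'.theta_bilin.zero_right_s9, m'.hr_bilin.zero_right_s9, hhl, zero_add, add_zero]
  · intro x p
    refine Prod.ext rfl ?_
    change m.hr x p = m'.theta 0 p + m'.hl 0 (r p) + m'.hr x p
    rw [m'.theta_bilin.zero_left_s9, m'.hl_bilin.zero_left_s9, hhr, zero_add, zero_add]
  · intro p q
    refine Prod.ext rfl ?_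
    change m.theta p q = m'.theta p q + m'.hl p (r q) + m'.hr (r p) q
    rw [ht, hhl, hhr]
  · intro p x
    refine Prod.ext rfl ?_
    change m.lact p x = m'.cf p 0 + m'.lact p x - m'.lact 0 (r p)
    rw [m'.cf_bilin.zero_right_s9, m'.lact_bilin.zero_left_s9, hla, zero_add, sub_zero]
  · intro p q
    refine Prod.ext rfl ?_
    change m.cf p q = m'.cf p q + m'.lact p (r q) - m'.lact q (r p)
    rw [hc, hla]

lemma metabelianRel_refl (m : MetabelianSystem k (P := P) (V := V)) : MetabelianRel k m m :=
  ⟨rfl, rfl, rfl, 0, by simp [m.hl_bilin.zero_right_s9, m.hr_bilin.zero_left_s9],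
    by simp [m.lact_bilin.zero_right_s9]⟩

/-- The maps of the system are obtained by composing the products and brackets in `E` with a linear
retraction of the inclusion of `V`; the choice does not matter, as these products and brackets
lie in the image of `V`. -/
lemma exists_presents (e : AbExt k P V) (s : P →ₗ[k] e.carrier) (hs : ∀ p, e.proj (s p) = p) :
    ∃ m, Presents e s m := by
  obtain ⟨j, hj⟩ := e.incl.exists_leftInverse_of_injective (LinearMap.ker_eq_bot.2 e.incl_inj)
  have hji : ∀ x, j (e.incl x) = x := fun x => LinearMap.congr_fun hj x
  have hij : ∀ w, e.proj w = 0 → e.incl (j w) = w := by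
    intro w hw
    obtain ⟨x, rfl⟩ := (e.exact w).1 hw
    rw [hji]
  have hmul : ∀ a b, e.incl (j (e.mulE a b)) = e.mulE a b := fun a b => hij _ (e.proj_mul a b)
  have hbr : ∀ a b, e.incl (j (e.brE a b)) = e.brE a b := fun a b => hij _ (e.proj_br a b)
  have hm := e.poisson.mul_bilin
  have hb := e.poisson.br_bilin
  have has := e.poisson.mul_assoc
  have hlz := e.poisson.leibniz
  have hanti := hb.antisymm e.poisson.br_alt
  have hjac := e.poisson.jacobi
  have mul0 : ∀ w w', e.proj w = 0 → e.proj w' = 0 → e.mulE w w' = 0 := by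
    intro w w' h h'
    rw [← hij w h, ← hij w' h', ← e.incl_mul, map_zero]
  have br0 : ∀ w w', e.proj w = 0 → e.proj w' = 0 → e.brE w w' = 0 := by
    intro w w' h h'
    rw [← hij w h, ← hij w' h', ← e.incl_br, map_zero]
  have pm : ∀ a b, e.proj (e.mulE a b) = 0 := e.proj_mul
  have pb : ∀ a b, e.proj (e.brE a b) = 0 := e.proj_br
  have pi : ∀ x, e.proj (e.incl x) = 0 := fun x => (e.exact _).2 ⟨x, rfl⟩
  refine ⟨
    { hl := fun p x => j (e.mulE (s p) (e.incl x))
      hr := fun x p => j (e.mulE (e.incl x) (s p))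
      theta := fun p q => j (e.mulE (s p) (s q))
      lact := fun p x => j (e.brE (s p) (e.incl x))
      cf := fun p q => j (e.brE (s p) (s q))
      hl_bilin := by
        obtain ⟨h1, h2, h3, h4⟩ := hm
        refine ⟨?_, ?_, ?_, ?_⟩ <;> intros <;> simp [h1, h2, h3, h4]
      hr_bilin := by
        obtain ⟨h1, h2, h3, h4⟩ := hm
        refine ⟨?_, ?_, ?_, ?_⟩ <;> intros <;> simp [h1, h2, h3, h4]
      theta_bilin := by
        obtain ⟨h1, h2, h3, h4⟩ := hm
        refine ⟨?_, ?_, ?_, ?_⟩ <;> intros <;> simp [h1, h2, h3, h4]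
      lact_bilin := by
        obtain ⟨h1, h2, h3, h4⟩ := hb
        refine ⟨?_, ?_, ?_, ?_⟩ <;> intros <;> simp [h1, h2, h3, h4]
      cf_bilin := by
        obtain ⟨h1, h2, h3, h4⟩ := hb
        refine ⟨?_, ?_, ?_, ?_⟩ <;> intros <;> simp [h1, h2, h3, h4]
      m1 := fun p q x => by simp only [hmul, has]
      m2 := fun p q r => by simp only [hmul, has]
      m3 := fun p q x => by
        simp only [hmul]
        rw [← has, mul0 _ _ (pm _ _) (pi _), map_zero]
      m4 := fun p q x => by
        simp only [hmul]
        rw [has, mul0 _ _ (pi _) (pm _ _), map_zero]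
      m5 := fun p => by simp only [e.poisson.br_alt, map_zero]
      m6 := fun p q x => by
        simp only [hbr]
        have h := hjac (s p) (s q) (e.incl x)
        rw [br0 _ _ (pb _ _) (pi _), zero_add, hanti _ (s p), hanti _ (s q),
          hanti (e.incl x) (s p), hb.neg_right, neg_neg, neg_add_eq_zero] at h
        rw [h]
      m7 := fun p q r => by
        simp only [hbr]
        rw [← map_add, ← map_add, hanti (s p) (e.brE _ _), hanti (s q) (e.brE _ _),
          hanti (s r) (e.brE _ _)]
        refine (congrArg j (Eq.trans ?_ (neg_eq_zero.2 (hjac (s p) (s q) (s r))))).trans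
          (map_zero j)
        abel
      m8 := fun p q r => by
        simp only [hmul, hbr]
        rw [hanti (s r), hlz, ← map_add, ← map_add]
        simp
      m9 := fun p q x => by
        simp only [hbr]
        have h := hlz (s p) (s q) (e.incl x)
        rw [br0 _ _ (pm _ _) (pi _)] at h
        rw [← map_neg, ← neg_eq_of_add_eq_zero_right h.symm]
      m10 := fun p q x => by
        simp only [hmul, hbr]
        have h := hlz (s p) (e.incl x) (s q)
        rw [mul0 _ _ (pb _ _) (pi _), zero_add, hanti _ (s q), hanti _ (s q), hm.neg_right,
          neg_inj] at h
        rw [h]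
      m11 := fun p q x => by
        simp only [hmul, hbr]
        have h := hlz (e.incl x) (s p) (s q)
        rw [mul0 _ _ (pi _) (pb _ _), add_zero, hanti _ (s q), hanti _ (s q), hm.neg_left,
          neg_inj] at h
        rw [h] }, hs, ?_, ?_, ?_, ?_, ?_⟩
  · exact fun p x => hmul _ _
  · exact fun p x => hmul _ _
  · exact fun p x => hmul _ _
  · exact fun p x => hbr _ _
  · exact fun p x => hbr _ _

/-- The equivalence is `(p, x) ↦ s p + x`. -/
lemma extRel_of_presents {e : AbExt k P V} {s : P →ₗ[k] e.carrier}
    {m : MetabelianSystem k (P := P) (V := V)} (h : Presents e s m) : ExtRel m.toExt e := by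
  have pi : ∀ x, e.proj (e.incl x) = 0 := fun x => (e.exact _).2 ⟨x, rfl⟩
  have hm := e.poisson.mul_bilin
  have hb := e.poisson.br_bilin
  have hanti := hb.antisymm e.poisson.br_alt
  have hbij : Function.Bijective (s.coprod e.incl) := by
    constructor
    · rw [← LinearMap.ker_eq_bot, LinearMap.ker_eq_bot']
      rintro ⟨p, x⟩ hx
      have hp : p = 0 := by
        have := congrArg e.proj hx
        simpa [h.sec, pi] using this
      subst hp
      have : e.incl x = e.incl 0 := by simpa using hx
      rw [e.incl_inj this]
      rfl
    · intro w
      obtain ⟨x, hx⟩ := (e.exact (w - s (e.proj w))).1 (by simp [h.sec])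
      exact ⟨(e.proj w, x), by simp [hx]⟩
  refine ⟨LinearEquiv.ofBijective (s.coprod e.incl) hbij, ?_, ?_, ?_, ?_⟩
  · rintro ⟨p, x⟩ ⟨q, y⟩
    change s 0 + e.incl (m.theta p q + m.hl p y + m.hr x q) =
      e.mulE (s p + e.incl x) (s q + e.incl y)
    rw [hm.1, hm.2.2.1, hm.2.2.1, ← e.incl_mul]
    simp only [map_add, map_zero, h.hl, h.hr, h.theta]
    abel
  · rintro ⟨p, x⟩ ⟨q, y⟩
    change s 0 + e.incl (m.cf p q + m.lact p y - m.lact q x) =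
      e.brE (s p + e.incl x) (s q + e.incl y)
    rw [hb.1, hb.2.2.1, hb.2.2.1, ← e.incl_br, hanti (e.incl x)]
    simp only [map_add, map_sub, map_zero, h.lact, h.cf]
    abel
  · intro v
    change s 0 + e.incl v = e.incl v
    simp
  · rintro ⟨p, x⟩
    change e.proj (s p + e.incl x) = p
    simp [h.sec, pi]

lemma metabelianRel_of_presents {e₁ e₂ : AbExt k P V} {s₁ : P →ₗ[k] e₁.carrier}
    {s₂ : P →ₗ[k] e₂.carrier} {m₁ m₂ : MetabelianSystem k (P := P) (V := V)}
    (h₁ : Presents e₁ s₁ m₁) (h₂ : Presents e₂ s₂ m₂) (h : ExtRel e₁ e₂) :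
    MetabelianRel k m₁ m₂ := by
  obtain ⟨φ, hφm, hφb, hφi, hφp⟩ := h
  obtain ⟨j, hj⟩ := e₂.incl.exists_leftInverse_of_injective (LinearMap.ker_eq_bot.2 e₂.incl_inj)
  -- The difference `φ ∘ s₁ - s₂` of two sections of `e₂`, viewed as a map into `V`.
  let r : P →ₗ[k] V := j ∘ₗ (φ.toLinearMap ∘ₗ s₁ - s₂)
  have hr : ∀ p, φ (s₁ p) = s₂ p + e₂.incl (r p) := by
    intro p
    obtain ⟨x, hx⟩ := (e₂.exact (φ (s₁ p) - s₂ p)).1 (by simp [hφp, h₁.sec, h₂.sec])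
    have : r p = x := by
      change j (φ (s₁ p) - s₂ p) = x
      rw [← hx]
      exact LinearMap.congr_fun hj x
    rw [this, hx]
    abel
  have hm := e₂.poisson.mul_bilin
  have hb := e₂.poisson.br_bilin
  have hanti := hb.antisymm e₂.poisson.br_alt
  have hhl : m₁.hl = m₂.hl := by
    funext p x
    apply e₂.incl_inj
    rw [← hφi, h₁.hl, hφm, hφi, hr, hm.1, ← e₂.incl_mul, h₂.hl, map_zero, add_zero]
  have hhr : m₁.hr = m₂.hr := by
    funext x p
    apply e₂.incl_inj
    rw [← hφi, h₁.hr, hφm, hφi, hr, hm.2.2.1, ← e₂.incl_mul, h₂.hr, map_zero, add_zero]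
  have hla : m₁.lact = m₂.lact := by
    funext p x
    apply e₂.incl_inj
    rw [← hφi, h₁.lact, hφb, hφi, hr, hb.1, ← e₂.incl_br, h₂.lact, map_zero, add_zero]
  refine ⟨hhl, hhr, hla, r, fun p q => e₂.incl_inj ?_, fun p q => e₂.incl_inj ?_⟩
  · rw [← hφi, h₁.theta, hφm, hr, hr, hm.1, hm.2.2.1, hm.2.2.1, ← e₂.incl_mul, hhl, hhr]
    simp only [map_add, map_zero, h₂.theta, h₂.hl, h₂.hr]
    abel
  · rw [← hφi, h₁.cf, hφb, hr, hr, hb.1, hb.2.2.1, hb.2.2.1, ← e₂.incl_br, hla,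
      hanti (e₂.incl (r p))]
    simp only [map_add, map_sub, map_zero, h₂.cf, h₂.lact]
    abel

lemma extRel_refl (e : AbExt k P V) : ExtRel e e :=
  ⟨LinearEquiv.refl k _, fun _ _ => rfl, fun _ _ => rfl, fun _ => rfl, fun _ => rfl⟩

lemma exists_section_presents (e : AbExt k P V) : ∃ m s, Presents e s m := by
  obtain ⟨s, hs⟩ := e.proj.exists_rightInverse_of_surjective (LinearMap.range_eq_top.2 e.proj_surj)
  obtain ⟨m, hm⟩ := exists_presents e s fun p => LinearMap.congr_fun hs p
  exact ⟨m, s, hm⟩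

variable (k)

/-- **Corollary 2.15.**  For vector spaces `P` and `V`, both regarded as abelian Poisson
algebras, `PH²(P₀, V₀)` — the set of equivalence classes of Poisson algebra extensions of
`P₀` by `V₀` — is in bijection with `MA(P,V)/≈ᵃₘ`. -/
theorem statement9 :
    Nonempty
      (Quot (fun e₁ e₂ : PoissonExt k P V (fun _ _ => 0) (fun _ _ => 0)
          (fun _ _ => 0) (fun _ _ => 0) => ExtRel e₁ e₂) ≃
       Quot (MetabelianRel k (P := P) (V := V))) := by
  choose G s hG using exists_section_presents (k := k) (P := P) (V := V)
  exact ⟨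
    { toFun := Quot.map G fun e₁ e₂ h => metabelianRel_of_presents (hG e₁) (hG e₂) h
      invFun := Quot.map MetabelianSystem.toExt fun _ _ h =>
        (exists_presents_toExt h).elim fun _ hs => extRel_of_presents hs
      left_inv := by
        rintro ⟨e⟩
        exact Quot.sound (extRel_of_presents (hG e))
      right_inv := by
        rintro ⟨m⟩
        obtain ⟨_, hs⟩ := exists_presents_toExt (metabelianRel_refl m)
        exact Quot.sound (metabelianRel_of_presents (hG _) hs (extRel_refl _)) }⟩

end Statement
end
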